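/- Fix a real number $\hbar>0$ and an integer $N\ge 2$; write $i$ for the imaginary unit, $\Gamma$ for the complex Gamma function and $\hbar^z:=\exp(z\log\hbar)$. Let $\gamma=(\gamma_{nj})_{1\le j\le n\le N}$ be an array of complex numbers and let $e_{nj}$ be the array equal to $1$ in position $(n,j)$ and $0$ elsewhere. For functions $f$ of such arrays and $1\le n\le N-1$ put $$(E_{n,n+1}f)(\gamma)=-\frac{1}{i\hbar}\sum_{j=1}^{n}\frac{\prod_{r=1}^{n+1}\left(\gamma_{nj}-\gamma_{n+1,r}-\frac{i\hbar}{2}\right)}{\prod_{s\le n,\,s\ne j}(\gamma_{nj}-\gamma_{ns})}\,f(\gamma-i\hbar e_{nj}),$$ $$(E_{n+1,n}f)(\gamma)=\frac{1}{i\hbar}\sum_{j=1}^{n}\frac{\prod_{r=1}^{n-1}\left(\gamma_{nj}-\gamma_{n-1,r}+\frac{i\hbar}{2}\right)}{\prod_{s\le n,\,s\ne j}(\gamma_{nj}-\gamma_{ns})}\,f(\gamma+i\hbar e_{nj}),$$ and define $w_N'(\gamma)=1$ and $$w_N(\gamma)=\exp\Big(-\frac{\pi}{\hbar}\sum_{n=1}^{N-1}(n-1)\sum_{j=1}^{n}\gamma_{nj}\Big)\prod_{n=1}^{N-1}\prod_{k=1}^{n}\prod_{m=1}^{n+1}\hbar^{\frac{\gamma_{nk}-\gamma_{n+1,m}}{i\hbar}+\frac12}\,\Gamma\Big(\frac{\gamma_{nk}-\gamma_{n+1,m}}{i\hbar}+\frac12\Big).$$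 Suppose that for every $1\le n\le N-1$ the number $(\gamma_{nj}-\gamma_{ns})/(i\hbar)$ is not an integer for all $1\le j<s\le n$ (that is, $\gamma$ is non-resonant), and that $(\gamma_{nk}-\gamma_{n+1,m})/(i\hbar)+\frac12$ is not an integer for all $1\le k\le n$, $1\le m\le n+1$. Then for every $1\le n\le N-1$ the Whittaker vector equations $$(E_{n,n+1}w_N)(\gamma)=-i\hbar^{-1}\,w_N(\gamma),\qquad (E_{n+1,n}w_N')(\gamma)=-i\hbar^{-1}\,w_N'(\gamma)$$ hold; the first one says explicitly that $$\sum_{j=1}^{n}\frac{\prod_{r=1}^{n+1}\left(\gamma_{nj}-\gamma_{n+1,r}-\frac{i\hbar}{2}\right)}{\prod_{s\le n,\,s\ne j}(\gamma_{nj}-\gamma_{ns})}\,w_N(\gamma-i\hbar e_{nj})=-w_N(\gamma).$$ -/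

import Mathlib

open Finset

noncomputable section

/-- A Gelfand–Zetlin array: complex values `γ n j`, relevant for `1 ≤ j ≤ n ≤ N`. -/
abbrev GZ := ℕ → ℕ → ℂ

/-- Shift of the single variable `γ n j` by `c`. -/
def gzShift (c : ℂ) (n j : ℕ) (γ : GZ) : GZ :=
  fun a b => if a = n ∧ b = j then γ a b + c else γ a b

/-- The raising Gelfand–Zetlin operator `E_{n,n+1}`. -/
def Eraise (ℏ : ℝ) (n : ℕ) (f : GZ → ℂ) : GZ → ℂ := fun γ =>
  -(1 / (Complex.I * ℏ)) * ∑ j ∈ Icc 1 n,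
    ((∏ r ∈ Icc 1 (n + 1), (γ n j - γ (n + 1) r - Complex.I * ℏ / 2)) /
      ∏ s ∈ (Icc 1 n).erase j, (γ n j - γ n s)) * f (gzShift (-(Complex.I * ℏ)) n j γ)

/-- The lowering Gelfand–Zetlin operator `E_{n+1,n}` (for `n ≥ 1`; the numerator is the empty
product when `n = 1`). -/
def Elower (ℏ : ℝ) (n : ℕ) (f : GZ → ℂ) : GZ → ℂ := fun γ =>
  1 / (Complex.I * ℏ) * ∑ j ∈ Icc 1 n,
    ((∏ r ∈ Icc 1 (n - 1), (γ n j - γ (n - 1) r + Complex.I * ℏ / 2)) /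
      ∏ s ∈ (Icc 1 n).erase j, (γ n j - γ n s)) * f (gzShift (Complex.I * ℏ) n j γ)

/-- Non-resonance: no two same-level entries below the top row differ by an integer multiple
of `iℏ`. -/
def NonResonant (ℏ : ℝ) (N : ℕ) (γ : GZ) : Prop :=
  ∀ n ∈ Icc 1 (N - 1), ∀ j s : ℕ, 1 ≤ j → j < s → s ≤ n →
    ∀ m : ℤ, (γ n j - γ n s) / (Complex.I * ℏ) ≠ (m : ℂ)

/-- `ℏ^z := exp(z log ℏ)`. -/
def hpow (ℏ : ℝ) (z : ℂ) : ℂ := Complex.exp (z * (Real.log ℏ : ℂ))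

/-- The factor `s_n(γ_n, γ_{n+1})`. -/
def sW (ℏ : ℝ) (n : ℕ) (γ : GZ) : ℂ :=
  ∏ k ∈ Icc 1 n, ∏ m ∈ Icc 1 (n + 1),
    hpow ℏ ((γ n k - γ (n + 1) m) / (Complex.I * ℏ) + 1 / 2) *
      Complex.Gamma ((γ n k - γ (n + 1) m) / (Complex.I * ℏ) + 1 / 2)

/-- The Whittaker vector `w_N` of the raising operators. -/
def wWhit (ℏ : ℝ) (N : ℕ) (γ : GZ) : ℂ :=
  Complex.exp (-((Real.pi / ℏ : ℝ) : ℂ) *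
      ∑ n ∈ Icc 1 (N - 1), ((n : ℂ) - 1) * ∑ j ∈ Icc 1 n, γ n j) *
    ∏ n ∈ Icc 1 (N - 1), sW ℏ n γ

/-- The Whittaker vector `w'_N = 1` of the lowering operators. -/
def wWhit' : GZ → ℂ := fun _ => 1

end

/-- Partial fractions at leading order: a monic polynomial of degree one less than the number of
nodes has divided difference `1`. -/
theorem sum_prod_sub_div_prod_erase {n : ℕ} (hn : 1 ≤ n) (x y : ℕ → ℂ)
    (hx : Set.InjOn x (Icc 1 n : Finset ℕ)) :
    ∑ j ∈ Icc 1 n, (∏ k ∈ Icc 1 (n - 1), (x j - y k)) /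
      ∏ s ∈ (Icc 1 n).erase j, (x j - x s) = 1 := by
  have hmon : (∏ k ∈ Icc 1 (n - 1), (Polynomial.X - Polynomial.C (y k))).Monic :=
    Polynomial.monic_prod_of_monic _ _ fun k _ => Polynomial.monic_X_sub_C _
  have hdeg : (∏ k ∈ Icc 1 (n - 1), (Polynomial.X - Polynomial.C (y k))).degree
      = ((n - 1 : ℕ) : WithBot ℕ) := by
    rw [Polynomial.degree_prod]
    simp
  have hcard : (((Icc 1 n).card : ℕ) : WithBot ℕ)
      = (∏ k ∈ Icc 1 (n - 1), (Polynomial.X - Polynomial.C (y k))).degree + 1 := by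
    rw [hdeg, Nat.card_Icc, Nat.add_sub_cancel]
    exact_mod_cast (Nat.sub_add_cancel hn).symm
  have h := Lagrange.leadingCoeff_eq_sum hx hcard
  rw [hmon.leadingCoeff] at h
  simpa [Polynomial.eval_prod] using h.symm

theorem NonResonant.injOn {ℏ : ℝ} {N n : ℕ} {γ : GZ} (hγ : NonResonant ℏ N γ)
    (hn : n ∈ Icc 1 (N - 1)) : Set.InjOn (γ n) (Icc 1 n : Finset ℕ) := by
  intro a ha b hb hab
  simp only [coe_Icc, Set.mem_Icc] at ha hb
  rcases lt_trichotomy a b with h | h | h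
  · exact absurd (by simp [hab]) (hγ n hn a b ha.1 h hb.2 0)
  · exact h
  · exact absurd (by simp [hab]) (hγ n hn b a hb.1 h ha.2 0)

theorem hpow_add_one {ℏ : ℝ} (hℏ : 0 < ℏ) (z : ℂ) : hpow ℏ (z + 1) = ℏ * hpow ℏ z := by
  rw [hpow, hpow, add_mul, one_mul, Complex.exp_add, ← Complex.ofReal_exp, Real.exp_log hℏ,
    mul_comm]

/-- The functional equation of `z ↦ ℏ^z Γ(z)`. -/
theorem hpow_mul_Gamma_add_one {ℏ : ℝ} (hℏ : 0 < ℏ) {z : ℂ} (hz : z ≠ 0) :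
    hpow ℏ (z + 1) * Complex.Gamma (z + 1) = ℏ * z * (hpow ℏ z * Complex.Gamma z) := by
  rw [hpow_add_one hℏ, Complex.Gamma_add_one z hz]
  ring

theorem gzShift_same (c : ℂ) (n j : ℕ) (γ : GZ) : gzShift c n j γ n j = γ n j + c := by
  simp [gzShift]

theorem gzShift_of_ne_row (c : ℂ) {a n : ℕ} (h : a ≠ n) (j b : ℕ) (γ : GZ) :
    gzShift c n j γ a b = γ a b := by
  simp [gzShift, h]

theorem gzShift_of_ne_col (c : ℂ) (a n : ℕ) {b j : ℕ} (h : b ≠ j) (γ : GZ) :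
    gzShift c n j γ a b = γ a b := by
  simp [gzShift, h]

/-- Shifting an entry of the lower row of `s_n`. -/
theorem sW_gzShift_lower {ℏ : ℝ} (hℏ : 0 < ℏ) {n j : ℕ} (hj : j ∈ Icc 1 n) {γ : GZ}
    (h : ∀ m ∈ Icc 1 (n + 1), (γ n j - γ (n + 1) m) / (Complex.I * ℏ) + 1 / 2 ≠ 1) :
    (∏ r ∈ Icc 1 (n + 1), (γ n j - γ (n + 1) r - Complex.I * ℏ / 2)) *
      sW ℏ n (gzShift (-(Complex.I * ℏ)) n j γ) = Complex.I ^ (n + 1) * sW ℏ n γ := by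
  have hℏ' : (ℏ : ℂ) ≠ 0 := by exact_mod_cast hℏ.ne'
  have hcard : Complex.I ^ (n + 1) = ∏ _r ∈ Icc 1 (n + 1), Complex.I := by simp
  unfold sW
  rw [← mul_prod_erase _ _ hj, ← mul_prod_erase _ _ hj, ← mul_assoc, ← mul_assoc, hcard,
    ← prod_mul_distrib, ← prod_mul_distrib]
  congr 1
  · refine prod_congr rfl fun m hm => ?_
    rw [gzShift_same, gzShift_of_ne_row _ (Nat.succ_ne_self n)]
    have hz := h m hm
    obtain ⟨z, hzdef⟩ : ∃ z, (γ n j - γ (n + 1) m) / (Complex.I * ℏ) + 1 / 2 = z + 1 :=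
      ⟨_, (sub_add_cancel _ 1).symm⟩
    have hz0 : z ≠ 0 := fun h0 => hz (by rw [hzdef, h0, zero_add])
    have hshift : (γ n j + -(Complex.I * ℏ) - γ (n + 1) m) / (Complex.I * ℏ) + 1 / 2 = z := by
      rw [← add_left_inj (1 : ℂ), ← hzdef]
      field_simp
      ring
    have hfac : γ n j - γ (n + 1) m - Complex.I * ℏ / 2 = Complex.I * (ℏ * z) := by
      have : z = (γ n j - γ (n + 1) m) / (Complex.I * ℏ) - 1 / 2 := by
        linear_combination -hzdef
      rw [this]
      field_simp
    rw [hshift, hzdef, hpow_mul_Gamma_add_one hℏ hz0, hfac]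
    ring
  · refine prod_congr rfl fun k hk => prod_congr rfl fun m _ => ?_
    rw [gzShift_of_ne_col _ _ _ (ne_of_mem_erase hk), gzShift_of_ne_row _ (Nat.succ_ne_self n)]

/-- Shifting an entry of the upper row of `s_n`. -/
theorem sW_gzShift_upper {ℏ : ℝ} (hℏ : 0 < ℏ) {n j : ℕ} (hj : j ∈ Icc 1 (n + 1)) {γ : GZ}
    (h : ∀ k ∈ Icc 1 n, (γ n k - γ (n + 1) j) / (Complex.I * ℏ) + 1 / 2 ≠ 0) :
    sW ℏ n (gzShift (-(Complex.I * ℏ)) (n + 1) j γ) =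
      Complex.I ^ n * (∏ k ∈ Icc 1 n, (γ (n + 1) j - (γ n k + Complex.I * ℏ / 2))) *
        sW ℏ n γ := by
  have hℏ' : (ℏ : ℂ) ≠ 0 := by exact_mod_cast hℏ.ne'
  have hcard : Complex.I ^ n = ∏ _k ∈ Icc 1 n, Complex.I := by simp
  unfold sW
  rw [hcard, ← prod_mul_distrib, ← prod_mul_distrib]
  refine prod_congr rfl fun k hk => ?_
  rw [← mul_prod_erase _ _ hj, ← mul_prod_erase (Icc 1 (n + 1)) _ hj, ← mul_assoc]
  congr 1
  · rw [gzShift_same, gzShift_of_ne_row _ (Nat.succ_ne_self n).symm]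
    have hshift : (γ n k - (γ (n + 1) j + -(Complex.I * ℏ))) / (Complex.I * ℏ) + 1 / 2
        = (γ n k - γ (n + 1) j) / (Complex.I * ℏ) + 1 / 2 + 1 := by
      field_simp
      ring
    have hfac : (ℏ : ℂ) * ((γ n k - γ (n + 1) j) / (Complex.I * ℏ) + 1 / 2)
        = Complex.I * (γ (n + 1) j - (γ n k + Complex.I * ℏ / 2)) := by
      field_simp
      linear_combination ((γ n k - γ (n + 1) j) * 2 + ℏ * Complex.I) * Complex.I_sq
    rw [hshift, hpow_mul_Gamma_add_one hℏ (h k hk), hfac]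
  · refine prod_congr rfl fun m hm => ?_
    rw [gzShift_of_ne_col _ _ _ (ne_of_mem_erase hm), gzShift_of_ne_row _ (Nat.succ_ne_self n).symm]

theorem sW_gzShift_of_ne (ℏ : ℝ) (c : ℂ) {a n : ℕ} (h : a ≠ n) (h' : a + 1 ≠ n) (j : ℕ) (γ : GZ) :
    sW ℏ a (gzShift c n j γ) = sW ℏ a γ := by
  simp only [sW, gzShift_of_ne_row _ h, gzShift_of_ne_row _ h']

theorem sum_gzShift_row (c : ℂ) {n j : ℕ} (hj : j ∈ Icc 1 n) (γ : GZ) :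
    ∑ b ∈ Icc 1 n, gzShift c n j γ n b = ∑ b ∈ Icc 1 n, γ n b + c := by
  rw [← add_sum_erase _ _ hj, ← add_sum_erase _ (γ n) hj, gzShift_same,
    sum_congr rfl fun b hb => gzShift_of_ne_col c n n (ne_of_mem_erase hb) γ]
  ring

/-- The exponential prefactor of `w_N` changes by the sign `(-1)^(n-1)`. -/
theorem exp_prefactor_gzShift {ℏ : ℝ} (hℏ : 0 < ℏ) {N n j : ℕ} (hn : n ∈ Icc 1 (N - 1))
    (hj : j ∈ Icc 1 n) (γ : GZ) :
    Complex.exp (-((Real.pi / ℏ : ℝ) : ℂ) * ∑ a ∈ Icc 1 (N - 1),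
        ((a : ℂ) - 1) * ∑ b ∈ Icc 1 a, gzShift (-(Complex.I * ℏ)) n j γ a b) =
      (-1) ^ (n - 1) * Complex.exp (-((Real.pi / ℏ : ℝ) : ℂ) *
        ∑ a ∈ Icc 1 (N - 1), ((a : ℂ) - 1) * ∑ b ∈ Icc 1 a, γ a b) := by
  have hℏ' : (ℏ : ℂ) ≠ 0 := by exact_mod_cast hℏ.ne'
  have hrest : ∀ a ∈ (Icc 1 (N - 1)).erase n,
      ((a : ℂ) - 1) * ∑ b ∈ Icc 1 a, gzShift (-(Complex.I * ℏ)) n j γ a b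
        = ((a : ℂ) - 1) * ∑ b ∈ Icc 1 a, γ a b := fun a ha => by
    simp only [gzShift_of_ne_row _ (ne_of_mem_erase ha)]
  have hcast : ((n - 1 : ℕ) : ℂ) = (n : ℂ) - 1 := by
    rw [Nat.cast_sub (mem_Icc.mp hn).1, Nat.cast_one]
  rw [← add_sum_erase _ _ hn, sum_congr rfl hrest, sum_gzShift_row _ hj,
    ← add_sum_erase (Icc 1 (N - 1)) (fun a => ((a : ℂ) - 1) * ∑ b ∈ Icc 1 a, γ a b) hn,
    ← Complex.exp_pi_mul_I, ← Complex.exp_nat_mul, ← Complex.exp_add, hcast]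
  congr 1
  push_cast
  field_simp
  ring

/-- The effect on `w_N` of the shift in `E_{n,n+1}`, multiplied by the numerator of the
coefficient. -/
theorem prod_mul_wWhit_gzShift {ℏ : ℝ} (hℏ : 0 < ℏ) {N n j : ℕ} {γ : GZ}
    (hγ' : ∀ n ∈ Icc 1 (N - 1), ∀ k ∈ Icc 1 n, ∀ m ∈ Icc 1 (n + 1),
      ∀ z : ℤ, (γ n k - γ (n + 1) m) / (Complex.I * ℏ) + 1 / 2 ≠ (z : ℂ))
    (hn : n ∈ Icc 1 (N - 1)) (hj : j ∈ Icc 1 n) :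
    (∏ r ∈ Icc 1 (n + 1), (γ n j - γ (n + 1) r - Complex.I * ℏ / 2)) *
        wWhit ℏ N (gzShift (-(Complex.I * ℏ)) n j γ) =
      -(∏ k ∈ Icc 1 (n - 1), (γ n j - (γ (n - 1) k + Complex.I * ℏ / 2))) * wWhit ℏ N γ := by
  have hlow := sW_gzShift_lower hℏ hj (γ := γ) fun m hm => by
    simpa using hγ' n hn j hj m hm 1
  unfold wWhit
  rw [exp_prefactor_gzShift hℏ hn hj, ← mul_prod_erase _ _ hn,
    ← mul_prod_erase _ (fun a => sW ℏ a γ) hn]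
  have hrest : ∏ a ∈ (Icc 1 (N - 1)).erase n, sW ℏ a (gzShift (-(Complex.I * ℏ)) n j γ) =
      Complex.I ^ (n - 1) * (∏ k ∈ Icc 1 (n - 1), (γ n j - (γ (n - 1) k + Complex.I * ℏ / 2))) *
        ∏ a ∈ (Icc 1 (N - 1)).erase n, sW ℏ a γ := by
    obtain ⟨p, rfl⟩ : ∃ p, n = p + 1 := ⟨n - 1, (Nat.sub_add_cancel (mem_Icc.mp hn).1).symm⟩
    simp only [Nat.add_sub_cancel]
    rcases Nat.eq_zero_or_pos p with rfl | hp
    · simp only [zero_add, pow_zero, one_mul, Icc_eq_empty_of_lt Nat.zero_lt_one, prod_empty]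
      refine prod_congr rfl fun a ha => sW_gzShift_of_ne _ _ (ne_of_mem_erase ha) ?_ _ _
      have := (mem_Icc.mp (mem_of_mem_erase ha)).1
      omega
    · have hpN : p ∈ Icc 1 (N - 1) := by
        simp only [mem_Icc] at hn ⊢
        omega
      have hpE : p ∈ (Icc 1 (N - 1)).erase (p + 1) := mem_erase.mpr ⟨by omega, hpN⟩
      rw [← mul_prod_erase _ _ hpE, ← mul_prod_erase _ (fun a => sW ℏ a γ) hpE,
        sW_gzShift_upper hℏ hj fun k hk => by simpa using hγ' p hpN k hk j hj 0, mul_assoc]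
      congr 2
      refine prod_congr rfl fun a ha => sW_gzShift_of_ne _ _
        (ne_of_mem_erase (mem_of_mem_erase ha)) ?_ _ _
      have := ne_of_mem_erase ha
      omega
  have hsign : (-1 : ℂ) ^ (n - 1) * Complex.I ^ (n + 1) * Complex.I ^ (n - 1) = -1 := by
    obtain ⟨p, rfl⟩ : ∃ p, n = p + 1 := ⟨n - 1, (Nat.sub_add_cancel (mem_Icc.mp hn).1).symm⟩
    rw [Nat.add_sub_cancel, mul_assoc, ← pow_add, show p + 1 + 1 + p = 2 * p + 2 by ring,
      pow_add, pow_mul, Complex.I_sq, ← mul_assoc, ← mul_pow]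
    norm_num
  rw [hrest]
  set E := Complex.exp (-((Real.pi / ℏ : ℝ) : ℂ) *
        ∑ a ∈ Icc 1 (N - 1), ((a : ℂ) - 1) * ∑ b ∈ Icc 1 a, γ a b)
  set P := ∏ k ∈ Icc 1 (n - 1), (γ n j - (γ (n - 1) k + Complex.I * ℏ / 2))
  set R := ∏ a ∈ (Icc 1 (N - 1)).erase n, sW ℏ a γ
  linear_combination ((-1) ^ (n - 1) * E * Complex.I ^ (n - 1) * P * R) * hlow +
    (P * E * sW ℏ n γ * R) * hsign

/-- `w_N` and `w'_N = 1` are Whittaker vectors with all eigenvalues `-i ℏ⁻¹ = (iℏ)⁻¹`: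
`(E_{n,n+1} w_N)(γ) = -iℏ⁻¹ w_N(γ)`, explicitly
`Σ_j [∏_r (γ_{nj} - γ_{n+1,r} - iℏ/2) / ∏_{s≠j} (γ_{nj} - γ_{ns})] · w_N(γ - iℏ e_{nj}) = -w_N(γ)`,
and `(E_{n+1,n} w'_N)(γ) = -iℏ⁻¹ w'_N(γ)`. -/
theorem whittaker_vector_wN (ℏ : ℝ) (hℏ : 0 < ℏ) (N : ℕ) (hN : 2 ≤ N)
    (γ : GZ) (hγ : NonResonant ℏ N γ)
    (hγ' : ∀ n ∈ Icc 1 (N - 1), ∀ k ∈ Icc 1 n, ∀ m ∈ Icc 1 (n + 1),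
      ∀ z : ℤ, (γ n k - γ (n + 1) m) / (Complex.I * ℏ) + 1 / 2 ≠ (z : ℂ)) :
    ∀ n : ℕ, 1 ≤ n → n ≤ N - 1 →
      Eraise ℏ n (wWhit ℏ N) γ = -(Complex.I * (ℏ : ℂ)⁻¹) * wWhit ℏ N γ ∧
      ∑ j ∈ Icc 1 n,
        ((∏ r ∈ Icc 1 (n + 1), (γ n j - γ (n + 1) r - Complex.I * ℏ / 2)) /
          ∏ s ∈ (Icc 1 n).erase j, (γ n j - γ n s)) *
          wWhit ℏ N (gzShift (-(Complex.I * ℏ)) n j γ) = -wWhit ℏ N γ ∧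
      Elower ℏ n wWhit' γ = -(Complex.I * (ℏ : ℂ)⁻¹) * wWhit' γ := by
  intro n hn1 hnN
  have hn : n ∈ Icc 1 (N - 1) := mem_Icc.mpr ⟨hn1, hnN⟩
  have hinj := hγ.injOn hn
  have hI : 1 / (Complex.I * (ℏ : ℂ)) = -(Complex.I * (ℏ : ℂ)⁻¹) := by
    rw [one_div, mul_inv, Complex.inv_I, neg_mul]
  have hsum : ∑ j ∈ Icc 1 n,
        ((∏ r ∈ Icc 1 (n + 1), (γ n j - γ (n + 1) r - Complex.I * ℏ / 2)) /
          ∏ s ∈ (Icc 1 n).erase j, (γ n j - γ n s)) *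
          wWhit ℏ N (gzShift (-(Complex.I * ℏ)) n j γ) = -wWhit ℏ N γ := by
    have hterm : ∀ j ∈ Icc 1 n,
        ((∏ r ∈ Icc 1 (n + 1), (γ n j - γ (n + 1) r - Complex.I * ℏ / 2)) /
          ∏ s ∈ (Icc 1 n).erase j, (γ n j - γ n s)) *
          wWhit ℏ N (gzShift (-(Complex.I * ℏ)) n j γ) =
        ((∏ k ∈ Icc 1 (n - 1), (γ n j - (γ (n - 1) k + Complex.I * ℏ / 2))) /
          ∏ s ∈ (Icc 1 n).erase j, (γ n j - γ n s)) * -wWhit ℏ N γ := fun j hj => by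
      rw [div_mul_eq_mul_div, prod_mul_wWhit_gzShift hℏ hγ' hn hj]
      ring
    rw [sum_congr rfl hterm, ← sum_mul,
      sum_prod_sub_div_prod_erase hn1 (γ n) (fun k => γ (n - 1) k + Complex.I * ℏ / 2) hinj,
      one_mul]
  refine ⟨?_, hsum, ?_⟩
  · unfold Eraise
    rw [hsum, neg_mul_neg, hI]
  · have hlow := sum_prod_sub_div_prod_erase hn1 (γ n)
      (fun k => γ (n - 1) k - Complex.I * ℏ / 2) hinj
    simp only [sub_sub_eq_add_sub, add_sub_right_comm] at hlow
    simp only [Elower, wWhit', mul_one]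
    rw [hlow, hI, mul_one]
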